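/- Let S be a set of n ≥ 3 points in ℝ² with no three points collinear, and let T be a triangulation of S. Then for every pair of distinct points u, v ∈ S there is a monotone path in T whose endpoints are u and v; consequently, T contains at least n(n−1)/2 monotone paths. -/

import Mathlib

open scoped BigOperators

noncomputable section

/-- Points of the plane. -/
abbrev Pt : Type := ℝ × ℝ

/-- Dot product on the plane. -/
def dotp (a b : Pt) : ℝ := a.1 * b.1 + a.2 * b.2

/-- The geometric conditions making `(V, E)` a plane straight-line graph:
every edge joins two distinct points of `V`, no point of `V` lies in the open
segment of an edge, and the open segments of two distinct edges are disjoint. -/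
def ValidEdges (V : Finset Pt) (E : Finset (Sym2 Pt)) : Prop :=
  (∀ a b : Pt, s(a, b) ∈ E → a ∈ V ∧ b ∈ V ∧ a ≠ b) ∧
  (∀ a b : Pt, s(a, b) ∈ E → ∀ v ∈ V, v ∉ openSegment ℝ a b) ∧
  (∀ a b c d : Pt, s(a, b) ∈ E → s(c, d) ∈ E → s(a, b) ≠ s(c, d) →
    openSegment ℝ a b ∩ openSegment ℝ c d = ∅)

/-- A plane straight-line graph. -/
structure PSLG where
  V : Finset Pt
  E : Finset (Sym2 Pt)
  valid : ValidEdges V E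

/-- A path in `G`: a sequence of at least two vertices, consecutive ones joined by edges. -/
def IsPathIn (G : PSLG) (L : List Pt) : Prop :=
  2 ≤ L.length ∧ L.Chain' (fun a b => s(a, b) ∈ G.E)

/-- An x-monotone path: x-coordinates strictly increasing along the path. -/
def IsXMonotonePath (G : PSLG) (L : List Pt) : Prop :=
  IsPathIn G L ∧ L.Chain' (fun a b => a.1 < b.1)

/-- Monotonicity of a vertex sequence in direction `u`. -/
def MonotoneInDir (u : Pt) (L : List Pt) : Prop :=
  L.Chain' (fun a b => 0 < dotp (b - a) u)

/-- A monotone path: monotone in some direction `u ≠ 0`. -/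
def IsMonotonePath (G : PSLG) (L : List Pt) : Prop :=
  IsPathIn G L ∧ ∃ u : Pt, u ≠ 0 ∧ MonotoneInDir u L

/-- The number of x-monotone paths in `G`. -/
def xMonCount (G : PSLG) : ℕ := Set.ncard {L : List Pt | IsXMonotonePath G L}

/-- The number of monotone paths in `G`, a path and its reversal counted once. -/
def monPathCount (G : PSLG) : ℕ :=
  Set.ncard {P : Set (List Pt) | ∃ L, IsMonotonePath G L ∧ P = {L, L.reverse}}

/-- Consecutive pairs along a cycle (including the wrap-around pair). -/
def cyclePairs (L : List Pt) : List (Pt × Pt) := L.zip (L.rotate 1)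

/-- A cycle in `G`: at least 3 pairwise distinct vertices, cyclically joined by edges. -/
def IsCycleIn (G : PSLG) (L : List Pt) : Prop :=
  3 ≤ L.length ∧ L.Nodup ∧ ∀ p ∈ cyclePairs L, s(p.1, p.2) ∈ G.E

/-- The union of the closed edge segments of a cycle. -/
def cycleBody (L : List Pt) : Set Pt := ⋃ p ∈ cyclePairs L, segment ℝ p.1 p.2

/-- A star-shaped polygon in `G`: a cycle for which some point `o` sees the boundary
in exactly one point along every ray emanating from `o`. -/
def IsStarShapedPolygon (G : PSLG) (L : List Pt) : Prop :=
  IsCycleIn G L ∧ ∃ o : Pt, ∀ d : Pt, d ≠ 0 →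
    ∃! p : Pt, p ∈ cycleBody L ∧ ∃ t : ℝ, 0 ≤ t ∧ p = o + t • d

/-- The edge set of a cycle, used to count polygons. -/
def cycleEdgeSet (L : List Pt) : Finset (Sym2 Pt) :=
  ((cyclePairs L).map (fun p => s(p.1, p.2))).toFinset

/-- The number of star-shaped polygons in `G`, counted by edge sets. -/
def starCount (G : PSLG) : ℕ :=
  Set.ncard {E' : Finset (Sym2 Pt) | ∃ L, IsStarShapedPolygon G L ∧ E' = cycleEdgeSet L}

/-- Cross product (signed area). -/
def crossp (a b : Pt) : ℝ := a.1 * b.2 - a.2 * b.1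

/-- A convex polygon in `G`: a cycle whose vertices are in strictly convex position and
appear along the cycle in their convex-hull cyclic order; equivalently, for every directed
edge of the cycle all other vertices lie strictly on the same (left or right) side. -/
def IsConvexPolygon (G : PSLG) (L : List Pt) : Prop :=
  IsCycleIn G L ∧
  ((∀ p ∈ cyclePairs L, ∀ v ∈ L, v ≠ p.1 → v ≠ p.2 → 0 < crossp (p.2 - p.1) (v - p.1)) ∨
   (∀ p ∈ cyclePairs L, ∀ v ∈ L, v ≠ p.1 → v ≠ p.2 → crossp (p.2 - p.1) (v - p.1) < 0))

/-- The number of convex polygons in `G`, counted by edge sets. -/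
def convexCount (G : PSLG) : ℕ :=
  Set.ncard {E' : Finset (Sym2 Pt) | ∃ L, IsConvexPolygon G L ∧ E' = cycleEdgeSet L}

/-- A triangulation: an edge-maximal plane straight-line graph. -/
def PSLG.IsTriangulation (G : PSLG) : Prop :=
  ∀ a ∈ G.V, ∀ b ∈ G.V, a ≠ b → s(a, b) ∉ G.E → ¬ ValidEdges G.V (insert s(a, b) G.E)

/-- An orientation of a PSLG: each edge `{a, b}` receives exactly one of the ordered
pairs `(a, b)`, `(b, a)`. -/
def IsOrientation (G : PSLG) (D : Finset (Pt × Pt)) : Prop :=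
  (∀ p ∈ D, s(p.1, p.2) ∈ G.E) ∧
  ∀ a b : Pt, s(a, b) ∈ G.E →
    (((a, b) ∈ D ∧ (b, a) ∉ D) ∨ ((b, a) ∈ D ∧ (a, b) ∉ D))

/-- A directed simple path in a directed graph on points. -/
def IsDirPath (D : Finset (Pt × Pt)) (L : List Pt) : Prop :=
  2 ≤ L.length ∧ L.Nodup ∧ L.Chain' (fun a b => (a, b) ∈ D)

/-- The number of directed simple paths. -/
def dirPathCount (D : Finset (Pt × Pt)) : ℕ := Set.ncard {L : List Pt | IsDirPath D L}

/-- No three of the points of `S` are collinear. -/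
def NoThreeCollinear (S : Finset Pt) : Prop :=
  ∀ p ∈ S, ∀ q ∈ S, ∀ r ∈ S, p ≠ q → p ≠ r → q ≠ r → ¬ Collinear ℝ ({p, q, r} : Set Pt)

/-- A maximal monotone path: not a proper subpath (up to reversal) of another
monotone path of `G`. -/
def IsMaximalMonotonePath (G : PSLG) (L : List Pt) : Prop :=
  IsMonotonePath G L ∧ ∀ M : List Pt, IsMonotonePath G M →
    (L <:+: M ∨ L.reverse <:+: M) → (L = M ∨ L.reverse = M)

/-!
In a fixed direction `w`, every vertex other than the highest ones has a neighbour above it, so a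
path that is monotone in direction `w` can be prolonged until it reaches a highest vertex. Hence
`u` and `v` are connected if `v` is highest in some direction, or `u` lowest.

Suppose `v` cannot be reached from `u` in any direction. Then in every direction `w` in which `v` is
higher than `u`, a path from `u` can be prolonged until it passes the height of `v`, so `v` is
strictly to its left or to its right. It cannot be both to the left of one path and to the right of
another: descend from `v` along edges; as edges do not cross, each vertex on the way is on both
sides as well, until the last edge passes `u` on both sides. But if `v` is strictly to one side of a
path, it remains so under small rotations of `w`, and rotating `w` towards the directions orthogonal
to `v - u` both sides do occur, because `u` has neighbours on both sides of the line `uv`. So two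
disjoint nonempty open sets cover the connected set of these directions, which is absurd.
-/

open AffineMap (lineMap)
open Filter Topology

section Plane

variable {a b c p r z w : Pt}

theorem dotp_sub (a b w : Pt) : dotp (a - b) w = dotp a w - dotp b w := by
  simp only [dotp, Prod.fst_sub, Prod.snd_sub]; ring

theorem dotp_neg (a w : Pt) : dotp a (-w) = -dotp a w := by
  simp only [dotp, Prod.fst_neg, Prod.snd_neg]; ring

theorem dotp_add_smul (a w d : Pt) (t : ℝ) : dotp a (w + t • d) = dotp a w + t * dotp a d := by
  simp only [dotp, Prod.fst_add, Prod.snd_add, Prod.smul_fst, Prod.smul_snd, smul_eq_mul]; ring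

theorem dotp_lineMap (a b w : Pt) (t : ℝ) :
    dotp (lineMap a b t) w = lineMap (dotp a w) (dotp b w) t := by
  simp only [dotp, AffineMap.lineMap_apply_module, Prod.fst_add, Prod.snd_add, Prod.smul_fst,
    Prod.smul_snd, smul_eq_mul]
  ring

theorem dotp_self_pos (hw : w ≠ 0) : 0 < dotp w w := by
  contrapose! hw
  simp only [dotp] at hw
  exact Prod.ext (mul_self_eq_zero.mp (by nlinarith [mul_self_nonneg w.1, mul_self_nonneg w.2]))
    (mul_self_eq_zero.mp (by nlinarith [mul_self_nonneg w.1, mul_self_nonneg w.2]))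

theorem ne_zero_of_dotp_lt (h : dotp a w < dotp b w) : w ≠ 0 := by
  rintro rfl
  simp [dotp] at h

theorem crossp_mul_dotp_sub (a b c w : Pt) :
    crossp a c * dotp b w - crossp b c * dotp a w = crossp a b * dotp c w := by
  simp only [crossp, dotp]; ring

/-- Twice the signed area of the triangle `abc`, positive when it is traversed counterclockwise;
its sign says on which side of the line `ab` the point `c` is. -/
def orient (a b c : Pt) : ℝ := crossp (b - a) (c - a)

theorem orient_lineMap (p r a b : Pt) (t : ℝ) :
    orient p r (lineMap a b t) = lineMap (orient p r a) (orient p r b) t := by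
  simp only [orient, crossp, AffineMap.lineMap_apply_module, Prod.fst_add, Prod.snd_add,
    Prod.smul_fst, Prod.smul_snd, Prod.fst_sub, Prod.snd_sub, smul_eq_mul]
  ring

theorem orient_swap (a b c : Pt) : orient a c b = -orient a b c := by
  simp only [orient, crossp]; ring

theorem orient_self_left (a b : Pt) : orient a b a = 0 := by
  simp [orient, crossp]

theorem orient_self_right (a b : Pt) : orient a b b = 0 := by
  simp only [orient, crossp]; ring

theorem orient_mul_sub_eq_of_dotp_eq (h : dotp z w = dotp p w) (r a b : Pt) :
    orient p r z * (dotp b w - dotp a w) =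
      (orient a b z - orient a b p) * (dotp r w - dotp p w) := by
  have := crossp_mul_dotp_sub (r - p) (b - a) (z - p) w
  rw [dotp_sub z p, h, sub_self, mul_zero] at this
  rw [← dotp_sub, ← dotp_sub, orient, sub_eq_zero.mp this]
  simp only [orient, crossp, Prod.fst_sub, Prod.snd_sub]
  ring

theorem orient_lineMap_self (a b : Pt) (t : ℝ) : orient a b (lineMap a b t) = 0 := by
  rw [orient_lineMap, orient_self_left, orient_self_right, AffineMap.lineMap_same_apply]

theorem eq_lineMap_of_orient_eq_zero (hpr : dotp p w ≠ dotp r w) (hz : orient p r z = 0) :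
    z = lineMap p r ((dotp z w - dotp p w) / (dotp r w - dotp p w)) := by
  have hd : dotp r w - dotp p w ≠ 0 := sub_ne_zero.mpr hpr.symm
  simp only [orient, crossp, Prod.fst_sub, Prod.snd_sub] at hz
  refine Prod.ext (mul_left_cancel₀ hd ?_) (mul_left_cancel₀ hd ?_) <;>
    simp only [AffineMap.lineMap_apply, vsub_eq_sub, vadd_eq_add, Prod.fst_add, Prod.snd_add,
      Prod.smul_fst, Prod.smul_snd, Prod.fst_sub, Prod.snd_sub, smul_eq_mul] <;>
    field_simp <;> simp only [dotp]
  · linear_combination -w.2 * hz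
  · linear_combination w.1 * hz

theorem eq_or_mem_openSegment_of_orient_eq_zero (hpz : dotp p w ≤ dotp z w)
    (hzr : dotp z w < dotp r w) (hz : orient p r z = 0) : z = p ∨ z ∈ openSegment ℝ p r := by
  have hd : 0 < dotp r w - dotp p w := sub_pos.mpr (hpz.trans_lt hzr)
  have hline := eq_lineMap_of_orient_eq_zero (hpz.trans_lt hzr).ne hz
  rcases hpz.eq_or_lt with hpz | hpz
  · left
    simpa [hpz] using hline
  · right
    rw [openSegment_eq_image_lineMap, hline]
    exact Set.mem_image_of_mem _ ⟨div_pos (sub_pos.mpr hpz) hd,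
      (div_lt_one hd).mpr (sub_lt_sub_right hzr _)⟩

theorem orient_eq_zero_of_dotp_eq (hw : w ≠ 0) (hab : dotp a w = dotp b w)
    (hac : dotp a w = dotp c w) : orient a b c = 0 := by
  have := crossp_mul_dotp_sub (b - a) w (c - a) w
  rw [dotp_sub, dotp_sub, hab, sub_self, ← hab, hac, sub_self, mul_zero, mul_zero, sub_zero] at this
  exact (mul_eq_zero.mp this).resolve_right (dotp_self_pos hw).ne'

end Plane

section Line

variable {k V P : Type*} [DivisionRing k] [AddCommGroup V] [Module k V] [AddTorsor V P]

theorem collinear_of_ne_of_mem_affineSpan_pair {a b x y m n : P} (hmn : m ≠ n)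
    (hm : m ∈ line[k, x, y]) (hn : n ∈ line[k, x, y]) (hm' : m ∈ line[k, a, b])
    (hn' : n ∈ line[k, a, b]) : Collinear k {x, y, a} := by
  have hxy := collinear_insert_insert_of_mem_affineSpan_pair hm hn
  have hab := collinear_insert_insert_of_mem_affineSpan_pair hm' hn'
  exact collinear_triple_of_mem_affineSpan_pair
    (hxy.mem_affineSpan_of_mem_of_ne (by simp) (by simp) (by simp) hmn)
    (hxy.mem_affineSpan_of_mem_of_ne (by simp) (by simp) (by simp) hmn)
    (hab.mem_affineSpan_of_mem_of_ne (by simp) (by simp) (by simp) hmn)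

theorem collinear_of_mem_affineSpan_pair {p r s z : P} (h : Collinear k {p, r, s}) (hpr : p ≠ r)
    (hz : z ∈ line[k, p, r]) : Collinear k {p, z, s} :=
  collinear_triple_of_mem_affineSpan_pair (left_mem_affineSpan_pair k p r) hz
    (h.mem_affineSpan_of_mem_of_ne (by simp) (by simp) (by simp) hpr)

end Line

section Segment

theorem sym2_eq_of_openSegment_inter_nonempty {a b c d : ℝ}
    (h : (openSegment ℝ a b ∩ openSegment ℝ c d).Nonempty)
    (ha : a ∉ openSegment ℝ c d) (hb : b ∉ openSegment ℝ c d)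
    (hc : c ∉ openSegment ℝ a b) (hd : d ∉ openSegment ℝ a b) : s(a, b) = s(c, d) := by
  obtain ⟨m, hm, hm'⟩ := h
  by_cases hab : a = b
  · simp_all
  by_cases hcd : c = d
  · simp_all
  rw [openSegment_eq_Ioo' hab, Set.mem_Ioo] at *
  rw [openSegment_eq_Ioo' hcd, Set.mem_Ioo] at *
  grind

variable {E : Type*} [AddCommGroup E] [Module ℝ E] {a b m : E}

theorem mem_affineSpan_pair_of_mem_openSegment (h : m ∈ openSegment ℝ a b) : m ∈ line[ℝ, a, b] := by
  rw [openSegment_eq_image_lineMap] at h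
  obtain ⟨t, -, rfl⟩ := h
  exact AffineMap.lineMap_mem_affineSpan_pair t a b

theorem right_mem_affineSpan_pair_of_mem_openSegment {c d : E} (hmc : m ≠ c)
    (hm : m ∈ openSegment ℝ c d) : d ∈ line[ℝ, c, m] :=
  (collinear_insert_of_mem_affineSpan_pair (mem_affineSpan_pair_of_mem_openSegment hm)
    ).mem_affineSpan_of_mem_of_ne (by simp) (by simp) (by simp) hmc.symm

theorem sym2_eq_of_collinear_of_mem_openSegment {c d : E} (hcol : Collinear ℝ {a, b, c})
    (hab : a ≠ b) (hm : m ∈ openSegment ℝ a b) (hm' : m ∈ openSegment ℝ c d)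
    (ha : a ∉ openSegment ℝ c d) (hb : b ∉ openSegment ℝ c d)
    (hc : c ∉ openSegment ℝ a b) (hd : d ∉ openSegment ℝ a b) : s(a, b) = s(c, d) := by
  have hmc : m ≠ c := fun h => hc (h ▸ hm)
  have hcl : c ∈ line[ℝ, a, b] :=
    hcol.mem_affineSpan_of_mem_of_ne (by simp) (by simp) (by simp) hab
  have hdl : d ∈ line[ℝ, a, b] :=
    affineSpan_pair_le_of_mem_of_mem hcl (mem_affineSpan_pair_of_mem_openSegment hm)
      (right_mem_affineSpan_pair_of_mem_openSegment hmc hm')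
  obtain ⟨s, rfl⟩ := mem_affineSpan_pair_iff_exists_lineMap_eq.mp hcl
  obtain ⟨t, rfl⟩ := mem_affineSpan_pair_iff_exists_lineMap_eq.mp hdl
  have hseg (p q r : ℝ) : lineMap a b r ∈ openSegment ℝ (lineMap a b p) (lineMap a b q) ↔
      r ∈ openSegment ℝ p q := by
    rw [← image_openSegment, (AffineMap.lineMap_injective ℝ hab).mem_set_image]
  obtain ⟨r, rfl⟩ := mem_affineSpan_pair_iff_exists_lineMap_eq.mp
    (mem_affineSpan_pair_of_mem_openSegment hm)
  have heq : s((0 : ℝ), 1) = s(s, t) := sym2_eq_of_openSegment_inter_nonempty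
    ⟨r, (hseg 0 1 r).mp (by simpa using hm), (hseg s t r).mp hm'⟩
    ((hseg s t 0).not.mp (by simpa using ha)) ((hseg s t 1).not.mp (by simpa using hb))
    ((hseg 0 1 s).not.mp (by simpa using hc)) ((hseg 0 1 t).not.mp (by simpa using hd))
  simpa using congrArg (Sym2.map (lineMap a b)) heq

theorem openSegment_subset_openSegment_of_mem {z : E} (hz : z ∈ segment ℝ a b) (hza : z ≠ a) :
    openSegment ℝ a z ⊆ openSegment ℝ a b := by
  obtain ⟨t, ⟨h0, h1⟩, rfl⟩ := segment_eq_image_lineMap ℝ a b ▸ hz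
  have h0 : 0 < t := h0.lt_of_ne (by rintro rfl; simp at hza)
  simp only [openSegment_eq_image_lineMap]
  rintro _ ⟨s, ⟨hs0, hs1⟩, rfl⟩
  exact ⟨s * t, ⟨mul_pos hs0 h0, mul_lt_one_of_nonneg_of_lt_one_left hs0.le hs1 h1⟩,
    (AffineMap.lineMap_lineMap_right a b t s).symm⟩

theorem exists_mem_disjoint_openSegment {E : Type*} [NormedAddCommGroup E] [NormedSpace ℝ E]
    {F : Set E} (hF : F.Finite) (hne : F.Nonempty) {x : E} (hx : x ∉ F) :
    ∃ q ∈ F, Disjoint (openSegment ℝ x q) F := by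
  obtain ⟨q, hq, hmin⟩ := F.exists_min_image (dist x) hF hne
  refine ⟨q, hq, Set.disjoint_left.mpr fun z hz hzF => (hmin z hzF).not_gt ?_⟩
  rw [openSegment_eq_image_lineMap] at hz
  obtain ⟨t, ⟨h0, h1⟩, rfl⟩ := hz
  rw [dist_left_lineMap, Real.norm_of_nonneg h0.le]
  exact mul_lt_of_lt_one_left (dist_pos.mpr fun h => hx (h ▸ hq)) h1

end Segment

section Triangle

variable {E : Type*} [AddCommGroup E] [Module ℝ E]

theorem exists_affineBasis_of_not_collinear (hE : Module.finrank ℝ E = 2) {x q c : E}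
    (h : ¬ Collinear ℝ {x, q, c}) : ∃ b : AffineBasis (Fin 3) ℝ E, ⇑b = ![x, q, c] := by
  have := Module.finite_of_finrank_eq_succ hE
  have hind := affineIndependent_iff_not_collinear_set.mpr h
  exact ⟨⟨_, hind, hind.affineSpan_eq_top_iff_card_eq_finrank_add_one.mpr (by simp [hE])⟩, rfl⟩

theorem range_vec3 {α : Type*} (x y z : α) : Set.range ![x, y, z] = {x, y, z} := by
  rw [Matrix.range_cons, Matrix.range_cons_cons_empty]; rfl

theorem eq_lineMap_of_coord_eq_zero (b : AffineBasis (Fin 3) ℝ E) {i j k : Fin 3} (hij : i ≠ j)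
    (hik : i ≠ k) (hjk : j ≠ k) {z : E} (h : b.coord i z = 0) :
    z = lineMap (b j) (b k) (b.coord k z) := by
  have huniv := (by decide : ∀ i j k : Fin 3, i ≠ j → i ≠ k → j ≠ k →
    (Finset.univ : Finset (Fin 3)) = {i, j, k}) i j k hij hik hjk
  have hsum := b.sum_coord_apply_eq_one z
  have hz := b.linear_combination_coord_eq_self z
  rw [huniv, Finset.sum_insert (by simp [hij, hik]), Finset.sum_pair hjk, h, zero_add] at hsum
  rw [huniv, Finset.sum_insert (by simp [hij, hik]), Finset.sum_pair hjk, h, zero_smul, zero_add,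
    eq_sub_of_add_eq hsum] at hz
  rw [AffineMap.lineMap_apply_module, hz]

theorem eq_or_mem_openSegment_of_coord_eq_zero (b : AffineBasis (Fin 3) ℝ E) {i j k : Fin 3}
    (hij : i ≠ j) (hik : i ≠ k) (hjk : j ≠ k) {z : E} (hi : b.coord i z = 0)
    (hj : 0 < b.coord j z) (hk : 0 ≤ b.coord k z) : z = b j ∨ z ∈ openSegment ℝ (b j) (b k) := by
  have hzk := eq_lineMap_of_coord_eq_zero b hij hik hjk hi
  have hsum : b.coord j z = 1 - b.coord k z := by
    have := congrArg (b.coord j) hzk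
    rwa [AffineMap.apply_lineMap, AffineBasis.coord_apply_eq, AffineBasis.coord_apply_ne _ hjk,
      AffineMap.lineMap_apply_ring, mul_one, mul_zero, add_zero] at this
  rcases hk.eq_or_lt with hk | hk
  · rw [← hk, AffineMap.lineMap_apply_zero] at hzk
    exact Or.inl hzk
  · rw [openSegment_eq_image_lineMap]
    exact Or.inr ⟨b.coord k z, ⟨hk, by linarith⟩, hzk.symm⟩

theorem coord_lineMap_of_ne {ι : Type*} (b : AffineBasis ι ℝ E) {i j : ι} (hij : i ≠ j) (p : E)
    (t : ℝ) : b.coord i (lineMap (b j) p t) = t * b.coord i p := by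
  rw [AffineMap.apply_lineMap, b.coord_apply_ne hij, AffineMap.lineMap_apply_ring, mul_zero,
    zero_add]

theorem eq_lineMap_of_mul_coord_eq (b : AffineBasis (Fin 3) ℝ E) {p e : E}
    (hp : b.coord 2 p ≠ 0) (h : b.coord 1 p * b.coord 2 e = b.coord 2 p * b.coord 1 e) :
    e = lineMap (b 0) p (b.coord 2 e / b.coord 2 p) := by
  obtain ⟨z, hz⟩ : ∃ z, z = lineMap (b 0) p (b.coord 2 e / b.coord 2 p) := ⟨_, rfl⟩
  have h1 : b.coord 1 e = b.coord 1 z := by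
    rw [hz, coord_lineMap_of_ne b (by decide)]
    field_simp
    linarith
  have h2 : b.coord 2 e = b.coord 2 z := by
    rw [hz, coord_lineMap_of_ne b (by decide), div_mul_cancel₀ _ hp]
  have h0 : b.coord 0 e = b.coord 0 z := by
    have he := b.sum_coord_apply_eq_one e
    have hz := b.sum_coord_apply_eq_one z
    rw [Fin.sum_univ_three] at he hz
    linarith
  exact hz ▸ b.ext_elem fun i => by fin_cases i <;> assumption

-- The ray from `b 0` along which coordinates 1 and 2 are in the ratio `α : β` passes through `m`,
-- and `e` is on the same side of it as `b 1`. Hence the segment from `m` to `e` leaves the triangle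
-- through one of the sides at `b 1`.
theorem exists_mem_openSegment_exit (b : AffineBasis (Fin 3) ℝ E) {m e : E} {α β : ℝ}
    (hα : 0 ≤ α) (hβ : 0 < β) (h0 : 0 < b.coord 0 m) (h2 : 0 < b.coord 2 m)
    (hm : β * b.coord 1 m = α * b.coord 2 m) (he : α * b.coord 2 e < β * b.coord 1 e)
    (hout : e ∉ convexHull ℝ (Set.range b)) :
    ∃ z ∈ openSegment ℝ m e, 0 < b.coord 1 z ∧ 0 ≤ b.coord 0 z ∧ 0 ≤ b.coord 2 z ∧
      (b.coord 0 z = 0 ∨ b.coord 2 z = 0) := by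
  have hend : min (b.coord 0 e) (b.coord 2 e) < 0 := by
    by_contra! h
    obtain ⟨he0, he2⟩ := le_min_iff.mp h
    have he1 : 0 ≤ b.coord 1 e := by nlinarith [mul_nonneg hα he2]
    refine hout (b.convexHull_eq_nonneg_coord ▸ fun i => ?_)
    fin_cases i <;> assumption
  obtain ⟨t, ⟨ht0, ht1⟩, ht⟩ := intermediate_value_Ioo' zero_le_one
    (f := fun t : ℝ => min (b.coord 0 (lineMap m e t)) (b.coord 2 (lineMap m e t)))
    (by simp only [AffineMap.apply_lineMap]; fun_prop)
    (by simpa [hend] using ⟨h0, h2⟩ : (0 : ℝ) ∈ Set.Ioo _ _)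
  have h02 := le_min_iff.mp ht.ge
  refine ⟨lineMap m e t, ?_, ?_, h02.1, h02.2, ?_⟩
  · rw [openSegment_eq_image_lineMap]
    exact Set.mem_image_of_mem _ ⟨ht0, ht1⟩
  · have h2z := h02.2
    simp only [AffineMap.apply_lineMap] at h2z ⊢
    simp only [AffineMap.lineMap_apply_module, smul_eq_mul] at h2z ⊢
    nlinarith [mul_pos ht0 (sub_pos.mpr he), mul_nonneg hα h2z]
  · rcases min_choice (b.coord 0 (lineMap m e t)) (b.coord 2 (lineMap m e t)) with h | h
    · exact Or.inl (h ▸ ht)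
    · exact Or.inr (h ▸ ht)

end Triangle

section Visibility

variable {G : PSLG} {x y q a b c d m : Pt}

/-- The point set covered by the drawing of `G`: its vertices and the open segments of its
edges. -/
def PSLG.drawing (G : PSLG) : Set Pt :=
  {p | p ∈ G.V ∨ ∃ a b, s(a, b) ∈ G.E ∧ p ∈ openSegment ℝ a b}

theorem PSLG.eq_of_mem_openSegment (G : PSLG) (hab : s(a, b) ∈ G.E) (hcd : s(c, d) ∈ G.E)
    (h1 : m ∈ openSegment ℝ a b) (h2 : m ∈ openSegment ℝ c d) : s(a, b) = s(c, d) := by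
  by_contra hne
  exact Set.notMem_empty m (G.valid.2.2 a b c d hab hcd hne ▸ ⟨h1, h2⟩)

theorem openSegment_eq_of_sym2_eq (h : s(a, b) = s(c, d)) :
    openSegment ℝ a b = openSegment ℝ c d := by
  rcases Sym2.eq_iff.mp h with ⟨rfl, rfl⟩ | ⟨rfl, rfl⟩
  · rfl
  · exact openSegment_symm ℝ _ _

theorem PSLG.IsTriangulation.edge_of_disjoint (htri : G.IsTriangulation) (ha : a ∈ G.V)
    (hb : b ∈ G.V) (hab : a ≠ b) (h : Disjoint (openSegment ℝ a b) G.drawing) :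
    s(a, b) ∈ G.E := by
  by_contra hE
  have hedge : ∀ c d, s(c, d) ∈ G.E → openSegment ℝ a b ∩ openSegment ℝ c d = ∅ := fun c d hcd =>
    Set.disjoint_iff_inter_eq_empty.mp (h.mono_right fun p hp => Or.inr ⟨c, d, hcd, hp⟩)
  refine htri a ha b hb hab hE ⟨fun c d hcd => ?_, fun c d hcd v hv => ?_,
    fun c d e f hcd hef hne => ?_⟩
  · rcases Finset.mem_insert.mp hcd with hcd | hcd
    · rcases Sym2.eq_iff.mp hcd with ⟨rfl, rfl⟩ | ⟨rfl, rfl⟩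
      exacts [⟨ha, hb, hab⟩, ⟨hb, ha, hab.symm⟩]
    · exact G.valid.1 c d hcd
  · rcases Finset.mem_insert.mp hcd with hcd | hcd
    · rw [openSegment_eq_of_sym2_eq hcd]
      exact fun hvab => Set.disjoint_left.mp h hvab (Or.inl hv)
    · exact G.valid.2.1 c d hcd v hv
  · rcases Finset.mem_insert.mp hcd with hcd | hcd <;>
      rcases Finset.mem_insert.mp hef with hef | hef
    · exact absurd (hcd.trans hef.symm) hne
    · rw [openSegment_eq_of_sym2_eq hcd, hedge e f hef]
    · rw [openSegment_eq_of_sym2_eq hef, Set.inter_comm, hedge c d hcd]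
    · exact G.valid.2.2 c d e f hcd hef hne

theorem PSLG.not_collinear_of_crossing (hx : x ∈ G.V) (hy : y ∈ G.V) (hxy : x ≠ y)
    (hE : s(x, y) ∉ G.E) (hV : ∀ v ∈ G.V, v ∉ openSegment ℝ x y) (hcd : s(c, d) ∈ G.E)
    (hm : m ∈ openSegment ℝ x y) (hm' : m ∈ openSegment ℝ c d) :
    ¬ Collinear ℝ {x, y, c} := fun hcol => by
  obtain ⟨hc, hd, -⟩ := G.valid.1 c d hcd
  exact hE (sym2_eq_of_collinear_of_mem_openSegment hcol hxy hm hm' (G.valid.2.1 c d hcd x hx)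
    (G.valid.2.1 c d hcd y hy) (hV c hc) (hV d hd) ▸ hcd)

/-- From `x` one sees the point `q` in the relative interior of the edge `cd`, which does not
point towards `x`: nothing is drawn strictly between `x` and `q`. The point `x` itself need not
be a vertex. -/
structure PSLG.SeesEdge (G : PSLG) (x q c d : Pt) : Prop where
  edge : s(c, d) ∈ G.E
  mem_openSegment : q ∈ openSegment ℝ c d
  not_collinear : ¬ Collinear ℝ {x, q, c}
  disjoint : Disjoint (openSegment ℝ x q) G.drawing

theorem PSLG.SeesEdge.symm (h : G.SeesEdge x q c d) : G.SeesEdge x q d c where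
  edge := Sym2.eq_swap ▸ h.edge
  mem_openSegment := openSegment_symm ℝ c d ▸ h.mem_openSegment
  not_collinear hcol := by
    obtain ⟨-, hd, -⟩ := G.valid.1 c d h.edge
    have hqd : q ≠ d := fun hqd => G.valid.2.1 c d h.edge d hd (hqd ▸ h.mem_openSegment)
    have hc : c ∈ line[ℝ, d, q] := right_mem_affineSpan_pair_of_mem_openSegment hqd
      (openSegment_symm ℝ c d ▸ h.mem_openSegment)
    refine h.not_collinear ?_
    have := collinear_of_mem_affineSpan_pair (s := x) (z := c)
      (by rwa [Set.pair_comm, Set.insert_comm] : Collinear ℝ {q, d, x}) hqd (Set.pair_comm d q ▸ hc)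
    rwa [Set.pair_comm, Set.insert_comm] at this
  disjoint := h.disjoint

theorem PSLG.finite_drawing_inter (hx : x ∈ G.V) (hy : y ∈ G.V) (hxy : x ≠ y)
    (hE : s(x, y) ∉ G.E) (hV : ∀ v ∈ G.V, v ∉ openSegment ℝ x y) :
    (G.drawing ∩ openSegment ℝ x y).Finite := by
  refine (G.V.finite_toSet.biUnion fun c _ => G.V.finite_toSet.biUnion fun d _ =>
    Set.Subsingleton.finite (s := {m | s(c, d) ∈ G.E ∧ m ∈ openSegment ℝ c d ∧
      m ∈ openSegment ℝ x y}) ?_).subset ?_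
  · rintro m ⟨hcd, hm, hm'⟩ n ⟨-, hn, hn'⟩
    by_contra hmn
    exact G.not_collinear_of_crossing hx hy hxy hE hV hcd hm' hm
      (collinear_of_ne_of_mem_affineSpan_pair hmn (mem_affineSpan_pair_of_mem_openSegment hm')
        (mem_affineSpan_pair_of_mem_openSegment hn') (mem_affineSpan_pair_of_mem_openSegment hm)
        (mem_affineSpan_pair_of_mem_openSegment hn))
  · rintro m ⟨hm | ⟨c, d, hcd, hm⟩, hm'⟩
    · exact absurd hm' (hV m hm)
    · obtain ⟨hc, hd, -⟩ := G.valid.1 c d hcd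
      exact Set.mem_biUnion hc (Set.mem_biUnion hd ⟨hcd, hm, hm'⟩)

theorem PSLG.IsTriangulation.exists_edge_or_seesEdge (htri : G.IsTriangulation) (hx : x ∈ G.V)
    (hy : y ∈ G.V) (hxy : x ≠ y) :
    (∃ z ∈ segment ℝ x y, s(x, z) ∈ G.E) ∨
      ∃ q ∈ openSegment ℝ x y, ∃ c d, G.SeesEdge x q c d := by
  obtain ⟨y', ⟨⟨hy', hyx⟩, hseg⟩, hfree⟩ := exists_mem_disjoint_openSegment
    (F := {v | (v ∈ G.V ∧ v ≠ x) ∧ v ∈ segment ℝ x y}) (x := x)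
    (G.V.finite_toSet.subset fun v hv => hv.1.1) ⟨y, ⟨hy, hxy.symm⟩, right_mem_segment ℝ x y⟩
    (fun h => h.1.2 rfl)
  have hsub : openSegment ℝ x y' ⊆ openSegment ℝ x y :=
    openSegment_subset_openSegment_of_mem hseg hyx
  have hV (v : Pt) (hv : v ∈ G.V) (hvs : v ∈ openSegment ℝ x y') : False :=
    Set.disjoint_left.mp hfree hvs ⟨⟨hv, by
      rintro rfl; exact hyx (left_mem_openSegment_iff.mp hvs).symm⟩,
      openSegment_subset_segment ℝ x y (hsub hvs)⟩
  by_cases hE : s(x, y') ∈ G.E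
  · exact Or.inl ⟨y', hseg, hE⟩
  have hmeet : (G.drawing ∩ openSegment ℝ x y').Nonempty := by
    by_contra! h
    exact hE (htri.edge_of_disjoint hx hy' hyx.symm (Set.disjoint_iff_inter_eq_empty.mpr
      (Set.inter_comm _ _ ▸ h)))
  obtain ⟨q, ⟨hq | ⟨c, d, hcd, hqcd⟩, hqs⟩, hdisj⟩ := exists_mem_disjoint_openSegment (x := x)
    (G.finite_drawing_inter hx hy' hyx.symm hE hV) hmeet
    (fun h => hyx (left_mem_openSegment_iff.mp h.2).symm)
  · exact (hV q hq hqs).elim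
  have hxq : x ≠ q := fun h => hV x hx (h ▸ hqs)
  refine Or.inr ⟨q, hsub hqs, c, d, hcd, hqcd, fun hcol => ?_, ?_⟩
  · exact G.not_collinear_of_crossing hx hy' hyx.symm hE hV hcd hqs hqcd
      (collinear_of_mem_affineSpan_pair hcol hxq
      (right_mem_affineSpan_pair_of_mem_openSegment hxq.symm hqs))
  · rw [Set.disjoint_left] at hdisj ⊢
    exact fun z hz hzd => hdisj hz ⟨hzd,
      openSegment_subset_openSegment_of_mem (openSegment_subset_segment ℝ x y' hqs) hxq.symm hz⟩

theorem PSLG.SeesEdge.coord_two_pos {B : AffineBasis (Fin 3) ℝ Pt} (h : G.SeesEdge x q c d)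
    (hB : ⇑B = ![x, q, c]) {v : Pt} (hv : v ∈ G.V) (hvx : v ≠ x)
    (hvB : v ∈ convexHull ℝ (Set.range B)) : 0 < B.coord 2 v := by
  rw [B.convexHull_eq_nonneg_coord] at hvB
  refine (hvB 2).lt_of_ne fun h2 => ?_
  have h1 : 0 < B.coord 1 v := (hvB 1).lt_of_ne fun h1 => hvx <| by
    simpa [← h1, hB] using eq_lineMap_of_coord_eq_zero B (i := 2) (j := 0) (k := 1)
      (by decide) (by decide) (by decide) h2.symm
  rcases eq_or_mem_openSegment_of_coord_eq_zero B (by decide) (by decide) (by decide) h2.symm h1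
    (hvB 0) with hvq | hvq <;> simp only [hB, Matrix.cons_val] at hvq
  · exact G.valid.2.1 c d h.edge v hv (hvq ▸ h.mem_openSegment)
  · exact Set.disjoint_left.mp h.disjoint (openSegment_symm ℝ x q ▸ hvq) (Or.inl hv)

theorem PSLG.SeesEdge.ne_left (h : G.SeesEdge x q c d) : q ≠ c := fun hqc =>
  G.valid.2.1 c d h.edge c (G.valid.1 c d h.edge).1 (hqc ▸ h.mem_openSegment)

theorem PSLG.SeesEdge.coord_zero_eq_zero {B : AffineBasis (Fin 3) ℝ Pt} (h : G.SeesEdge x q c d)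
    (hB : ⇑B = ![x, q, c]) (hm : m ∈ openSegment ℝ c d) : B.coord 0 m = 0 := by
  have hline : m ∈ line[ℝ, B 2, B 1] := by
    simp only [hB, Matrix.cons_val]
    exact affineSpan_pair_le_of_mem_of_mem (left_mem_affineSpan_pair ℝ c q)
      (right_mem_affineSpan_pair_of_mem_openSegment h.ne_left h.mem_openSegment)
      (mem_affineSpan_pair_of_mem_openSegment hm)
  obtain ⟨t, rfl⟩ := mem_affineSpan_pair_iff_exists_lineMap_eq.mp hline
  rw [coord_lineMap_of_ne B (by decide), B.coord_apply_ne (by decide), mul_zero]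

theorem PSLG.SeesEdge.exists_mul_coord_lt {B : AffineBasis (Fin 3) ℝ Pt} {p e f : Pt}
    (hp : 0 < B.coord 2 p) (hm : m ∈ openSegment ℝ (B 0) p) (h : G.SeesEdge (B 0) m e f) :
    ∃ e f, G.SeesEdge (B 0) m e f ∧ B.coord 1 p * B.coord 2 e < B.coord 2 p * B.coord 1 e := by
  have hne : B.coord 1 p * B.coord 2 e ≠ B.coord 2 p * B.coord 1 e := fun heq =>
    h.not_collinear <| collinear_triple_of_mem_affineSpan_pair (left_mem_affineSpan_pair ℝ (B 0) p)
      (mem_affineSpan_pair_of_mem_openSegment hm)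
      (eq_lineMap_of_mul_coord_eq B hp.ne' heq ▸ AffineMap.lineMap_mem_affineSpan_pair ..)
  rcases hne.lt_or_gt with hlt | hgt
  · exact ⟨e, f, h, hlt⟩
  refine ⟨f, e, h.symm, ?_⟩
  obtain ⟨s, ⟨hs0, hs1⟩, hms⟩ := openSegment_eq_image_lineMap ℝ e f ▸ h.mem_openSegment
  obtain ⟨t, -, rfl⟩ := openSegment_eq_image_lineMap ℝ (B 0) p ▸ hm
  have hm1 := congrArg (B.coord 1) hms
  have hm2 := congrArg (B.coord 2) hms
  rw [coord_lineMap_of_ne B (by decide), AffineMap.apply_lineMap,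
    AffineMap.lineMap_apply_ring] at hm1 hm2
  refine lt_of_mul_lt_mul_left ?_ hs0.le
  linear_combination (1 - s) * hgt + B.coord 1 p * hm2 - B.coord 2 p * hm1

theorem PSLG.SeesEdge.mem_convexHull_of_mul_coord_lt {B : AffineBasis (Fin 3) ℝ Pt} {p e f : Pt}
    (h : G.SeesEdge x q c d) (hB : ⇑B = ![x, q, c]) (hp : p ∈ convexHull ℝ (Set.range B))
    (hp2 : 0 < B.coord 2 p) (hm : m ∈ openSegment ℝ x p) (hef : s(e, f) ∈ G.E)
    (hmef : m ∈ openSegment ℝ e f) (he : B.coord 1 p * B.coord 2 e < B.coord 2 p * B.coord 1 e) :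
    e ∈ convexHull ℝ (Set.range B) := by
  by_contra hout
  have hB0 : B 0 = x := by simp [hB]
  have hB1 : B 1 = q := by simp [hB]
  have hB2 : B 2 = c := by simp [hB]
  rw [B.convexHull_eq_nonneg_coord] at hp
  obtain ⟨t, ⟨ht0, ht1⟩, htm⟩ := openSegment_eq_image_lineMap ℝ x p ▸ hm
  have hm0 : 0 < B.coord 0 m := by
    rw [← htm, ← hB0, AffineMap.apply_lineMap, B.coord_apply_eq, AffineMap.lineMap_apply_ring]
    nlinarith [mul_nonneg ht0.le (hp 0)]
  have hm1 : B.coord 1 m = t * B.coord 1 p := by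
    rw [← htm, ← hB0, coord_lineMap_of_ne B (by decide)]
  have hm2 : B.coord 2 m = t * B.coord 2 p := by
    rw [← htm, ← hB0, coord_lineMap_of_ne B (by decide)]
  obtain ⟨z, hz, hz1, hz0, hz2, hside⟩ := exists_mem_openSegment_exit B (hp 1) hp2 hm0
    (by rw [hm2]; exact mul_pos ht0 hp2) (by rw [hm1, hm2]; ring) he hout
  have hme : m ≠ e := fun h => G.valid.2.1 e f hef e (G.valid.1 e f hef).1 (h ▸ hmef)
  have hze : z ∈ openSegment ℝ e f := openSegment_subset_openSegment_of_mem
    (openSegment_subset_segment ℝ e f hmef) hme (openSegment_symm ℝ m e ▸ hz)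
  have hzcd : z ∉ openSegment ℝ c d := fun hzcd => hm0.ne' <| h.coord_zero_eq_zero hB <|
    openSegment_eq_of_sym2_eq (G.eq_of_mem_openSegment hef h.edge hze hzcd) ▸ hmef
  rcases hside with hside | hside
  · rcases eq_or_mem_openSegment_of_coord_eq_zero B (by decide) (by decide) (by decide) hside hz1
      hz2 with hzq | hzq
    · exact hzcd (hzq ▸ hB1 ▸ h.mem_openSegment)
    · rw [hB1, hB2, openSegment_symm] at hzq
      exact hzcd (openSegment_subset_openSegment_of_mem
        (openSegment_subset_segment ℝ c d h.mem_openSegment) h.ne_left hzq)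
  · rcases eq_or_mem_openSegment_of_coord_eq_zero B (by decide) (by decide) (by decide) hside hz1
      hz0 with hzq | hzq
    · exact hzcd (hzq ▸ hB1 ▸ h.mem_openSegment)
    · rw [hB0, hB1, openSegment_symm] at hzq
      exact Set.disjoint_left.mp h.disjoint hzq (Or.inr ⟨e, f, hef, hze⟩)

-- Among the vertices `p ≠ x` in the triangle `xqc`, take one for which the ray `xp` is closest to
-- `xq`. If an edge `ef` blocks the view from `x` to `p`, then its endpoint `e` on the side of `q`
-- is outside the triangle by maximality, so `ef` leaves it across `xq` or `qc`. But nothing is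
-- drawn across `xq`, and no edge crosses `cd`.
theorem PSLG.SeesEdge.exists_edge_mem_convexHull (htri : G.IsTriangulation) (hx : x ∈ G.V)
    (h : G.SeesEdge x q c d) : ∃ p ∈ convexHull ℝ {x, q, c}, s(x, p) ∈ G.E := by
  classical
  by_contra! hno
  obtain ⟨B, hB⟩ := exists_affineBasis_of_not_collinear (by simp) h.not_collinear
  have hrange : Set.range B = {x, q, c} := by rw [hB, range_vec3]
  have hB0 : B 0 = x := by simp [hB]
  rw [← hrange] at hno
  obtain ⟨p, hp, hmax⟩ := (G.V.filter fun v => v ≠ x ∧ v ∈ convexHull ℝ (Set.range B)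
    ).exists_max_image (fun v => B.coord 1 v / B.coord 2 v) ⟨c,
      Finset.mem_filter.mpr ⟨(G.valid.1 c d h.edge).1,
        (ne₁₃_of_not_collinear h.not_collinear).symm, subset_convexHull ℝ _ (by simp [hrange])⟩⟩
  obtain ⟨hpV, hpx, hpB⟩ := Finset.mem_filter.mp hp
  have hp2 := h.coord_two_pos hB hpV hpx hpB
  rcases htri.exists_edge_or_seesEdge hx hpV hpx.symm with ⟨z, hz, hxz⟩ | ⟨m, hm, e, f, hsee⟩
  · exact hno z ((convex_convexHull ℝ _).segment_subset
      (subset_convexHull ℝ _ (Set.mem_range.mpr ⟨0, hB0⟩)) hpB hz) hxz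
  obtain ⟨e, f, hsee, he⟩ := PSLG.SeesEdge.exists_mul_coord_lt hp2 (hB0 ▸ hm) (hB0.symm ▸ hsee)
  rw [hB0] at hsee
  have heV := (G.valid.1 e f hsee.edge).1
  have hex : e ≠ x := (ne₁₃_of_not_collinear hsee.not_collinear).symm
  have heB := h.mem_convexHull_of_mul_coord_lt hB hpB hp2 hm hsee.edge hsee.mem_openSegment he
  have hle := hmax e (Finset.mem_filter.mpr ⟨heV, hex, heB⟩)
  rw [div_le_div_iff₀ (h.coord_two_pos hB heV hex heB) hp2] at hle
  linarith

end Visibility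

section Monotone

variable {G : PSLG} {w p r x y z a b c q u v : Pt} {σ : ℝ}

/-- The edge `ab`, directed so that it ascends in direction `w`. -/
def UpEdge (G : PSLG) (w a b : Pt) : Prop := s(a, b) ∈ G.E ∧ dotp a w < dotp b w

theorem dotp_lt_dotp_of_mem_segment (hz : z ∈ segment ℝ x y) (hzx : z ≠ x)
    (h : dotp x w < dotp y w) : dotp x w < dotp z w := by
  obtain ⟨t, ⟨ht, -⟩, rfl⟩ := segment_eq_image_lineMap ℝ x y ▸ hz
  have ht0 : 0 < t := ht.lt_of_ne (by rintro rfl; simp at hzx)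
  rw [dotp_lineMap]
  exact (left_lt_lineMap_iff_lt ht0).mpr h

theorem PSLG.SeesEdge.exists_dotp_lt (h : G.SeesEdge x q c d) (hq : dotp x w < dotp q w) :
    ∃ c d, G.SeesEdge x q c d ∧ dotp x w < dotp c w := by
  by_cases hc : dotp x w < dotp c w
  · exact ⟨c, d, h, hc⟩
  refine ⟨d, c, h.symm, ?_⟩
  by_contra hd
  obtain ⟨t, ht, rfl⟩ := openSegment_eq_image_lineMap ℝ c d ▸ h.mem_openSegment
  rw [dotp_lineMap] at hq
  exact hq.not_ge ((convex_Iic (dotp x w)).lineMap_mem (not_lt.mp hc) (not_lt.mp hd)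
    (Set.Ioo_subset_Icc_self ht))

theorem PSLG.IsTriangulation.exists_upEdge (htri : G.IsTriangulation) (hx : x ∈ G.V)
    (hy : y ∈ G.V) (hxy : dotp x w < dotp y w) : ∃ z, UpEdge G w x z := by
  have hne : x ≠ y := by rintro rfl; exact lt_irrefl _ hxy
  have hpne : ∀ {p}, s(x, p) ∈ G.E → p ≠ x := fun hp => (G.valid.1 x _ hp).2.2.symm
  rcases htri.exists_edge_or_seesEdge hx hy hne with ⟨z, hz, hxz⟩ | ⟨q, hq, c, d, hsee⟩
  · exact ⟨z, hxz, dotp_lt_dotp_of_mem_segment hz (hpne hxz) hxy⟩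
  have hqx := ne₁₂_of_not_collinear hsee.not_collinear
  have hxq : dotp x w < dotp q w :=
    dotp_lt_dotp_of_mem_segment (openSegment_subset_segment ℝ x y hq) hqx.symm hxy
  obtain ⟨c, d, hsee, hxc⟩ := hsee.exists_dotp_lt hxq
  obtain ⟨p, hp, hxp⟩ := hsee.exists_edge_mem_convexHull htri hx
  rw [convexHull_insert (Set.insert_nonempty q {c}), convexHull_pair,
    convexJoin_singleton_left, Set.mem_iUnion₂] at hp
  obtain ⟨r, hr, hp⟩ := hp
  obtain ⟨t, ht, rfl⟩ := segment_eq_image_lineMap ℝ q c ▸ hr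
  refine ⟨p, hxp, dotp_lt_dotp_of_mem_segment hp (hpne hxp) ?_⟩
  rw [dotp_lineMap]
  exact (convex_Ioi (dotp x w)).lineMap_mem hxq hxc ht

theorem UpEdge.neg (h : UpEdge G w a b) : UpEdge G (-w) b a :=
  ⟨Sym2.eq_swap ▸ h.1, by rw [dotp_neg, dotp_neg]; exact neg_lt_neg h.2⟩

theorem UpEdge.orient_lineMap_ne_zero (hpr : UpEdge G w p r) (hxy : UpEdge G w x y) (hne : x ≠ p)
    {t : ℝ} (ht : t ∈ Set.Ico 0 1) (hl : dotp p w ≤ dotp (lineMap x y t) w)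
    (hr : dotp (lineMap x y t) w < dotp r w) : orient p r (lineMap x y t) ≠ 0 := by
  intro hz
  have hzx : lineMap x y t = x ∨ lineMap x y t ∈ openSegment ℝ x y := by
    rcases ht.1.eq_or_lt with rfl | h0
    · simp
    · exact Or.inr (openSegment_eq_image_lineMap ℝ x y ▸ Set.mem_image_of_mem _ ⟨h0, ht.2⟩)
  rcases eq_or_mem_openSegment_of_orient_eq_zero hl hr hz with hzp | hzp <;>
    rcases hzx with hzx | hzx
  · exact hne (hzx.symm.trans hzp)
  · exact G.valid.2.1 x y hxy.1 p (G.valid.1 p r hpr.1).1 (hzp ▸ hzx)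
  · exact G.valid.2.1 p r hpr.1 x (G.valid.1 x y hxy.1).1 (hzx ▸ hzp)
  · rcases Sym2.eq_iff.mp (G.eq_of_mem_openSegment hxy.1 hpr.1 hzx hzp) with ⟨h, -⟩ | ⟨rfl, rfl⟩
    · exact hne h
    · exact lt_asymm hpr.2 hxy.2

theorem UpEdge.orient_lineMap_pos (hpr : UpEdge G w p r) (hxy : UpEdge G w x y) (hne : x ≠ p)
    {t : ℝ} (ht : t ∈ Set.Icc 0 1) (hl : dotp p w ≤ dotp (lineMap x y t) w)
    (hr : dotp y w ≤ dotp r w) (hy : 0 < σ * orient p r y) :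
    0 < σ * orient p r (lineMap x y t) := by
  by_contra! hneg
  have hcont : Continuous fun s : ℝ => σ * orient p r (lineMap x y s) := by
    simp only [orient_lineMap]
    fun_prop
  obtain ⟨s, ⟨hts, hs1⟩, hs⟩ := intermediate_value_Ico ht.2 hcont.continuousOn
    (show (0 : ℝ) ∈ Set.Ico _ _ from ⟨hneg, by simpa using hy⟩)
  have hσ : σ ≠ 0 := by rintro rfl; simp at hy
  refine hpr.orient_lineMap_ne_zero hxy hne ⟨ht.1.trans hts, hs1⟩ ?_ ?_
    ((mul_eq_zero.mp hs).resolve_left hσ)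
  · refine hl.trans ?_
    rw [dotp_lineMap, dotp_lineMap, AffineMap.lineMap_apply_ring', AffineMap.lineMap_apply_ring']
    gcongr
    exact sub_nonneg.mpr hxy.2.le
  · rw [dotp_lineMap]
    exact (lineMap_lt_right_iff_lt hs1).mpr hxy.2 |>.trans_le hr

theorem UpEdge.same_side (hpr : UpEdge G w p r) (hxy : UpEdge G w x y) (hne : x ≠ p)
    (hl : dotp p w ≤ dotp x w) (hr : dotp y w ≤ dotp r w) (hy : 0 < σ * orient p r y) :
    0 < σ * orient p r x := by
  simpa using hpr.orient_lineMap_pos hxy hne (t := 0) (by simp) (by simpa using hl) hr hy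

theorem UpEdge.opposite_side (hpr : UpEdge G w p r) (hxy : UpEdge G w x y) (hne : x ≠ p)
    (hxp : dotp x w ≤ dotp p w) (hpy : dotp p w ≤ dotp y w) (hr : dotp y w ≤ dotp r w)
    (hy : 0 < σ * orient p r y) : 0 < -σ * orient x y p := by
  obtain ⟨t, ht, htp⟩ : dotp p w ∈ (lineMap (dotp x w) (dotp y w) : ℝ → ℝ) '' Set.Icc 0 1 :=
    segment_eq_image_lineMap ℝ (dotp x w) (dotp y w) ▸ segment_eq_Icc hxy.2.le ▸ ⟨hxp, hpy⟩
  rw [← dotp_lineMap] at htp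
  have hpos := hpr.orient_lineMap_pos hxy hne ht htp.ge hr hy
  have hid := orient_mul_sub_eq_of_dotp_eq htp r x y
  rw [orient_lineMap_self, zero_sub] at hid
  refine pos_of_mul_pos_left ?_ (sub_pos.mpr hpr.2).le
  calc 0 < σ * orient p r (lineMap x y t) * (dotp y w - dotp x w) :=
        mul_pos hpos (sub_pos.mpr hxy.2)
    _ = -σ * orient x y p * (dotp r w - dotp p w) := by rw [mul_assoc, hid]; ring

/-- `b` is `a` or the last vertex of a path from `a` that is monotone in direction `w`. -/
def Reaches (G : PSLG) (w a b : Pt) : Prop := Relation.ReflTransGen (UpEdge G w) a b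

theorem Reaches.dotp_le (h : Reaches G w a b) : dotp a w ≤ dotp b w := by
  induction h with
  | refl => exact le_rfl
  | tail _ h ih => exact ih.trans h.2.le

theorem Reaches.mem (h : Reaches G w a b) (ha : a ∈ G.V) : b ∈ G.V := by
  induction h with
  | refl => exact ha
  | tail _ h _ => exact (G.valid.1 _ _ h.1).2.1

theorem Reaches.neg (h : Reaches G w a b) : Reaches G (-w) b a := by
  induction h with
  | refl => exact Relation.ReflTransGen.refl
  | tail _ h ih => exact Relation.ReflTransGen.head h.neg ih

theorem exists_highest_reaches (hu : u ∈ G.V) {k : ℝ} (hk : dotp u w ≤ k) :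
    ∃ a, Reaches G w u a ∧ dotp a w ≤ k ∧
      ∀ b, Reaches G w u b → dotp b w ≤ k → dotp b w ≤ dotp a w := by
  classical
  obtain ⟨a, ha, hmax⟩ := (G.V.filter fun a => Reaches G w u a ∧ dotp a w ≤ k).exists_max_image
    (fun a => dotp a w) ⟨u, Finset.mem_filter.mpr ⟨hu, Relation.ReflTransGen.refl, hk⟩⟩
  obtain ⟨-, hua, hak⟩ := Finset.mem_filter.mp ha
  exact ⟨a, hua, hak, fun b hb hbk => hmax b (Finset.mem_filter.mpr ⟨hb.mem hu, hb, hbk⟩)⟩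

/-- At the height of `q`, the point `q` is strictly to the left (`σ = 1`) or right (`σ = -1`) of an
edge of a path that starts at `u` and is monotone in direction `w`. -/
def BesidePath (G : PSLG) (w : Pt) (σ : ℝ) (u q : Pt) : Prop :=
  ∃ a b, Reaches G w u a ∧ UpEdge G w a b ∧ dotp a w ≤ dotp q w ∧ dotp q w < dotp b w ∧
    0 < σ * orient a b q

theorem Reaches.lt_or_besidePath (ha : Reaches G w u a) (hxq : UpEdge G w x q)
    (hxa : dotp x w < dotp a w) (haq : dotp a w ≤ dotp q w) (hside : 0 < -σ * orient x q a)
    (hno : ¬ Reaches G w u x) :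
    (dotp x w < dotp u w ∧ 0 < -σ * orient x q u) ∨
      (dotp u w ≤ dotp x w ∧ BesidePath G w σ u x) := by
  induction ha with
  | refl => exact Or.inl ⟨hxa, hside⟩
  | @tail a' a ha' hstep ih =>
    have hne : a' ≠ x := by rintro rfl; exact hno ha'
    rcases lt_or_ge (dotp x w) (dotp a' w) with h | h
    · exact ih h (hstep.2.le.trans haq) (hxq.same_side hstep hne h.le haq hside)
    · refine Or.inr ⟨(Reaches.dotp_le ha').trans h, a', a, ha', hstep, h, hxa, ?_⟩
      simpa using hxq.opposite_side hstep hne h hxa.le haq hside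

theorem BesidePath.descend (h : BesidePath G w σ u q) (hxq : UpEdge G w x q)
    (hno : ¬ Reaches G w u x) :
    (dotp x w < dotp u w ∧ 0 < -σ * orient x q u) ∨
      (dotp u w ≤ dotp x w ∧ BesidePath G w σ u x) := by
  obtain ⟨a, b, ha, hab, haq, hqb, hside⟩ := h
  have hne : x ≠ a := by rintro rfl; exact hno ha
  rcases lt_or_ge (dotp x w) (dotp a w) with hlt | hge
  · exact ha.lt_or_besidePath hxq hlt haq
      (hab.opposite_side hxq hne hlt.le haq hqb.le hside) hno
  · exact Or.inr ⟨ha.dotp_le.trans hge, a, b, ha, hab, hge, hxq.2.trans hqb,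
      hab.same_side hxq hne hge hqb.le hside⟩

-- Descend from a lowest vertex `q` below `v` that is on both sides. The next vertex down can be
-- neither at the height of `u` or above, by the choice of `q`, nor below `u`, since the last edge
-- would then pass `u` on both sides.
theorem BesidePath.not_both (htri : G.IsTriangulation) (hv : v ∈ G.V)
    (huv : dotp u w ≤ dotp v w) (hno : ¬ Reaches G w u v) (hy : y ∈ G.V)
    (hyu : dotp y w < dotp u w) (hleft : BesidePath G w 1 u v) :
    ¬ BesidePath G w (-1) u v := by
  classical
  intro hright
  obtain ⟨q, hq, hmin⟩ := (G.V.filter fun q => Reaches G w q v ∧ dotp u w ≤ dotp q w ∧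
    BesidePath G w 1 u q ∧ BesidePath G w (-1) u q).exists_min_image (fun q => dotp q w)
      ⟨v, Finset.mem_filter.mpr ⟨hv, Relation.ReflTransGen.refl, huv, hleft, hright⟩⟩
  obtain ⟨hqV, hqv, huq, hql, hqr⟩ := Finset.mem_filter.mp hq
  obtain ⟨x, hqx⟩ := htri.exists_upEdge (w := -w) hqV hy
    (by rw [dotp_neg, dotp_neg]; linarith)
  have hxq : UpEdge G w x q := by simpa using hqx.neg
  have hxv : Reaches G w x v := Relation.ReflTransGen.head hxq hqv
  have hnox : ¬ Reaches G w u x := fun h => hno (h.trans hxv)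
  rcases hql.descend hxq hnox with ⟨hxu, hl⟩ | ⟨hux, hl⟩ <;>
    rcases hqr.descend hxq hnox with ⟨hxu', hr⟩ | ⟨hux', hr⟩
  · linarith
  · exact hux'.not_gt hxu
  · exact hux.not_gt hxu'
  · exact hxq.2.not_ge
      (hmin x (Finset.mem_filter.mpr ⟨(G.valid.1 _ _ hxq.1).1, hxv, hux, hl, hr⟩))

theorem PSLG.IsTriangulation.besidePath_one_or_neg_one (htri : G.IsTriangulation) (hu : u ∈ G.V)
    (hv : v ∈ G.V) (huv : dotp u w ≤ dotp v w) (hno : ¬ Reaches G w u v) (hy : y ∈ G.V)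
    (hvy : dotp v w < dotp y w) : BesidePath G w 1 u v ∨ BesidePath G w (-1) u v := by
  obtain ⟨a, ha, hav, hmax⟩ := exists_highest_reaches hu huv
  obtain ⟨b, hb⟩ := htri.exists_upEdge (ha.mem hu) hy (hav.trans_lt hvy)
  have hvb : dotp v w < dotp b w := by
    by_contra! h
    exact hb.2.not_ge (hmax b (ha.tail hb) h)
  rcases lt_trichotomy (orient a b v) 0 with h | h | h
  · exact Or.inr ⟨a, b, ha, hb, hav, hvb, by linarith⟩
  · rcases eq_or_mem_openSegment_of_orient_eq_zero hav hvb h with rfl | hvab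
    · exact absurd ha hno
    · exact absurd hvab (G.valid.2.1 a b hb.1 v hv)
  · exact Or.inl ⟨a, b, ha, hb, hav, hvb, by linarith⟩

theorem continuous_dotp_right (a : Pt) : Continuous fun w => dotp a w := by
  unfold dotp; fun_prop

theorem eventually_dotp_lt_dotp (h : dotp a w < dotp b w) :
    ∀ᶠ w' in 𝓝 w, dotp a w' < dotp b w' :=
  (isOpen_lt (continuous_dotp_right a) (continuous_dotp_right b)).mem_nhds h

theorem UpEdge.eventually (h : UpEdge G w a b) : ∀ᶠ w' in 𝓝 w, UpEdge G w' a b :=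
  (eventually_dotp_lt_dotp h.2).mono fun _ h' => ⟨h.1, h'⟩

theorem Reaches.eventually (h : Reaches G w a b) : ∀ᶠ w' in 𝓝 w, Reaches G w' a b := by
  induction h with
  | refl => exact Eventually.of_forall fun _ => Relation.ReflTransGen.refl
  | tail _ h ih =>
    filter_upwards [ih, UpEdge.eventually h] with w' h1 h2 using h1.tail h2

-- If `q` has the height of `a`, then `q` is also beside the edge that enters `a`, and this edge
-- takes over for the directions that put `q` below `a`.
theorem BesidePath.eventually (h : BesidePath G w σ u q) (huq : dotp u w < dotp q w) :
    ∀ᶠ w' in 𝓝 w, BesidePath G w' σ u q := by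
  obtain ⟨a, b, ha, hab, haq, hqb, hside⟩ := h
  rcases haq.lt_or_eq with haq | haq
  · filter_upwards [ha.eventually, hab.eventually, eventually_dotp_lt_dotp haq,
      eventually_dotp_lt_dotp hqb] with w' ha hab haq hqb using ⟨a, b, ha, hab, haq.le, hqb, hside⟩
  rcases Relation.ReflTransGen.cases_tail ha with rfl | ⟨a', ha', hstep : UpEdge G w a' a⟩
  · exact absurd haq huq.ne
  have hside' : 0 < σ * orient a' a q := by
    have hid := orient_mul_sub_eq_of_dotp_eq haq.symm b a' a
    rw [orient_self_right, sub_zero] at hid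
    refine pos_of_mul_pos_left ?_ (sub_pos.mpr hab.2).le
    rw [mul_assoc, ← hid, ← mul_assoc]
    exact mul_pos hside (sub_pos.mpr hstep.2)
  filter_upwards [Reaches.eventually ha', ha.eventually, hab.eventually, hstep.eventually,
    eventually_dotp_lt_dotp (haq ▸ hstep.2), eventually_dotp_lt_dotp hqb]
    with w' ha' ha hab hstep ha'q hqb
  rcases le_or_gt (dotp a w') (dotp q w') with h | h
  · exact ⟨a, b, ha, hab, h, hqb, hside⟩
  · exact ⟨a', a, ha', hstep, ha'q.le, h, hside'⟩

theorem PSLG.IsTriangulation.exists_reaches_dotp_eq (htri : G.IsTriangulation) (hu : u ∈ G.V)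
    (hv : v ∈ G.V) (hmax : ∀ x ∈ G.V, dotp x w ≤ dotp v w) :
    ∃ a, Reaches G w u a ∧ dotp a w = dotp v w := by
  obtain ⟨a, ha, hav, hhighest⟩ := exists_highest_reaches hu (hmax u hu)
  refine ⟨a, ha, hav.antisymm (not_lt.mp fun hlt => ?_)⟩
  obtain ⟨b, hab⟩ := htri.exists_upEdge (ha.mem hu) hv hlt
  have hub := ha.tail hab
  exact hab.2.not_ge (hhighest b hub (hmax b (Reaches.mem hub hu)))

theorem PSLG.IsTriangulation.reaches_add_smul_of_highest (htri : G.IsTriangulation) (ha : a ∈ G.V)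
    (hv : v ∈ G.V) (hav : a ≠ v) (hw : w ≠ 0) (heq : dotp a w = dotp v w)
    (hmax : ∀ x ∈ G.V, dotp x w ≤ dotp v w) {ε : ℝ} (hε : 0 < ε)
    (hlow : ∀ x ∈ G.V, dotp x w < dotp v w →
      dotp x (w + ε • (v - a)) < dotp a (w + ε • (v - a))) :
    Reaches G (w + ε • (v - a)) a v := by
  have hd : dotp a (v - a) < dotp v (v - a) :=
    sub_pos.mp (dotp_sub v a (v - a) ▸ dotp_self_pos (sub_ne_zero.mpr hav.symm))
  have htop : ∀ x ∈ G.V, dotp a (w + ε • (v - a)) ≤ dotp x (w + ε • (v - a)) →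
      dotp x w = dotp v w := fun x hx hax =>
    (hmax x hx).antisymm (not_lt.mp fun hlt => (hlow x hx hlt).not_ge hax)
  have hav' : dotp a (w + ε • (v - a)) ≤ dotp v (w + ε • (v - a)) := by
    rw [dotp_add_smul, dotp_add_smul, heq]
    gcongr
  obtain ⟨x, hax, hxv, hhighest⟩ := exists_highest_reaches ha hav'
  have hx := hax.mem ha
  have hxw := htop x hx hax.dotp_le
  rcases hxv.eq_or_lt with hxv | hxv
  · rw [dotp_add_smul, dotp_add_smul, hxw, add_right_inj, mul_right_inj' hε.ne'] at hxv
    have := eq_lineMap_of_orient_eq_zero hd.ne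
      (orient_eq_zero_of_dotp_eq hw heq (heq.trans hxw.symm))
    rw [hxv, div_self (sub_pos.mpr hd).ne', AffineMap.lineMap_apply_one] at this
    exact this ▸ hax
  obtain ⟨b, hxb⟩ := htri.exists_upEdge hx hv hxv
  have hb := (G.valid.1 x b hxb.1).2.1
  have hvb : dotp v (w + ε • (v - a)) < dotp b (w + ε • (v - a)) :=
    not_le.mp fun h => hxb.2.not_ge (hhighest b (hax.tail hxb) h)
  have hbw := htop b hb (hav'.trans hvb.le)
  rcases eq_or_mem_openSegment_of_orient_eq_zero hxv.le hvb
    (orient_eq_zero_of_dotp_eq hw (hxw.trans hbw.symm) hxw) with rfl | hvxb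
  · exact absurd hxv (lt_irrefl _)
  · exact absurd hvxb (G.valid.2.1 x b hxb.1 v hv)

-- A path that ascends to the height of `v` may end at another vertex `a` of that height; tilting
-- the direction slightly from `a` towards `v` keeps this path and lets it go on along the top line.
theorem PSLG.IsTriangulation.exists_reaches_of_highest (htri : G.IsTriangulation)
    (hu : u ∈ G.V) (hv : v ∈ G.V) (hw : w ≠ 0) (hmax : ∀ x ∈ G.V, dotp x w ≤ dotp v w) :
    ∃ w', Reaches G w' u v := by
  obtain ⟨a, hua, heq⟩ := htri.exists_reaches_dotp_eq hu hv hmax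
  obtain rfl | hav := eq_or_ne a v
  · exact ⟨w, hua⟩
  have hlim : Tendsto (fun ε : ℝ => w + ε • (v - a)) (𝓝[>] 0) (𝓝 w) := by
    have : Continuous fun ε : ℝ => w + ε • (v - a) := by fun_prop
    simpa using (this.tendsto 0).mono_left nhdsWithin_le_nhds
  have hlow : ∀ᶠ ε in 𝓝[>] (0 : ℝ), ∀ x ∈ G.V, dotp x w < dotp v w →
      dotp x (w + ε • (v - a)) < dotp a (w + ε • (v - a)) := by
    refine (Filter.eventually_all_finset G.V).mpr fun x _ => ?_
    by_cases hx : dotp x w < dotp v w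
    · exact (hlim.eventually (eventually_dotp_lt_dotp (hx.trans_eq heq.symm))).mono fun _ h _ => h
    · exact Eventually.of_forall fun _ h => absurd h hx
  obtain ⟨ε, hua', hlow, hε⟩ :=
    ((hlim.eventually hua.eventually).and (hlow.and self_mem_nhdsWithin)).exists
  exact ⟨_, hua'.trans (htri.reaches_add_smul_of_highest (hua.mem hu) hv hav hw heq hmax hε hlow)⟩

/-- The vector `d`, rotated counterclockwise by a right angle. -/
def perp (d : Pt) : Pt := (-d.2, d.1)

theorem dotp_perp (a d : Pt) : dotp a (perp d) = crossp d a := by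
  simp only [dotp, perp, crossp]; ring

theorem perp_ne_zero {d : Pt} (hd : d ≠ 0) : perp d ≠ 0 := fun h =>
  hd (Prod.ext (congrArg Prod.snd h) (neg_eq_zero.mp (congrArg Prod.fst h)))

/-- The directions `tilt u v t`, for real `t`, are, up to positive scaling, those in which `v` is
higher than `u`. -/
def tilt (u v : Pt) (t : ℝ) : Pt := (v - u) + t • perp (v - u)

theorem continuous_tilt (u v : Pt) : Continuous (tilt u v) := by
  unfold tilt; fun_prop

theorem dotp_tilt_sub (u v a b : Pt) (t : ℝ) :
    dotp b (tilt u v t) - dotp a (tilt u v t) =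
      dotp (b - a) (v - u) + t * crossp (v - u) (b - a) := by
  rw [tilt, ← dotp_sub, dotp_add_smul, dotp_perp]

theorem dotp_tilt_lt (huv : u ≠ v) (t : ℝ) : dotp u (tilt u v t) < dotp v (tilt u v t) := by
  have hself : crossp (v - u) (v - u) = 0 := by simp only [crossp]; ring
  rw [← sub_pos, dotp_tilt_sub, hself, mul_zero, add_zero]
  exact dotp_self_pos (sub_ne_zero.mpr huv.symm)

theorem tilt_ne_zero (huv : u ≠ v) (t : ℝ) : tilt u v t ≠ 0 :=
  ne_zero_of_dotp_lt (dotp_tilt_lt huv t)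

theorem dotp_perp_sub_eq (u v : Pt) : dotp v (perp (v - u)) = dotp u (perp (v - u)) := by
  rw [dotp_perp, dotp_perp]; simp only [crossp, Prod.fst_sub, Prod.snd_sub]; ring

theorem isOpen_setOf_besidePath_tilt (huv : u ≠ v) (σ : ℝ) :
    IsOpen {t | BesidePath G (tilt u v t) σ u v} :=
  isOpen_iff_mem_nhds.mpr fun t ht =>
    (continuous_tilt u v).continuousAt.eventually (BesidePath.eventually ht (dotp_tilt_lt huv t))

-- Tilting the direction far enough towards `b` makes `b` higher than `v`.
theorem exists_besidePath_tilt (huv : u ≠ v) (hub : s(u, b) ∈ G.E)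
    (hb : 0 < -σ * orient u v b) : ∃ t, BesidePath G (tilt u v t) σ u v := by
  have hcross : crossp (v - u) (b - v) = orient u v b := by
    simp only [orient, crossp, Prod.fst_sub, Prod.snd_sub]; ring
  have hne : orient u v b ≠ 0 := fun h => by simp [h] at hb
  set t := (1 - dotp (b - v) (v - u)) / orient u v b with ht
  have hvb : dotp v (tilt u v t) < dotp b (tilt u v t) := by
    rw [← sub_pos, dotp_tilt_sub, hcross, ht, div_mul_cancel₀ _ hne]
    linarith
  have huv' := dotp_tilt_lt huv t
  refine ⟨t, u, b, Relation.ReflTransGen.refl, ⟨hub, huv'.trans hvb⟩, huv'.le, hvb, ?_⟩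
  rwa [orient_swap, mul_neg, ← neg_mul]

theorem PSLG.IsTriangulation.exists_reaches (htri : G.IsTriangulation) (hu : u ∈ G.V)
    (hv : v ∈ G.V) (huv : u ≠ v) : ∃ w, Reaches G w u v := by
  by_contra! hno
  have hhigh : ∀ w, w ≠ 0 → ∃ y ∈ G.V, dotp v w < dotp y w := fun w hw => by
    by_contra! hmax
    obtain ⟨w', hw'⟩ := htri.exists_reaches_of_highest hu hv hw hmax
    exact hno w' hw'
  have hlow : ∀ w, w ≠ 0 → ∃ y ∈ G.V, dotp y w < dotp u w := fun w hw => by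
    by_contra! hmin
    obtain ⟨w', hw'⟩ := htri.exists_reaches_of_highest hv hu (neg_ne_zero.mpr hw)
      (fun x hx => by rw [dotp_neg, dotp_neg]; exact neg_le_neg (hmin x hx))
    exact hno (-w') hw'.neg
  have hn : perp (v - u) ≠ 0 := perp_ne_zero (sub_ne_zero.mpr huv.symm)
  have horient : ∀ b, orient u v b = dotp b (perp (v - u)) - dotp u (perp (v - u)) := fun b => by
    rw [orient, ← dotp_sub, dotp_perp]
  obtain ⟨y, hy, hyn⟩ := hhigh _ hn
  obtain ⟨b, hub, hb⟩ := htri.exists_upEdge hu hy (dotp_perp_sub_eq u v ▸ hyn)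
  obtain ⟨z, hz, hzn⟩ := hlow _ hn
  obtain ⟨c, huc, hc⟩ := htri.exists_upEdge (w := -perp (v - u)) hu hz
    (by rwa [dotp_neg, dotp_neg, neg_lt_neg_iff])
  rw [dotp_neg, dotp_neg, neg_lt_neg_iff] at hc
  obtain ⟨t, -, hleft, hright⟩ := isPreconnected_univ _ _
    (isOpen_setOf_besidePath_tilt (G := G) huv 1) (isOpen_setOf_besidePath_tilt huv (-1))
    (fun t _ => by
      obtain ⟨y, hy, hvy⟩ := hhigh _ (tilt_ne_zero huv t)
      exact htri.besidePath_one_or_neg_one hu hv (dotp_tilt_lt huv t).le (hno _) hy hvy)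
    ((exists_besidePath_tilt huv huc (by rw [horient]; linarith)).imp fun _ h => ⟨trivial, h⟩)
    ((exists_besidePath_tilt huv hub (by rw [horient]; linarith)).imp fun _ h => ⟨trivial, h⟩)
  obtain ⟨y, hy, hyu⟩ := hlow _ (tilt_ne_zero huv t)
  exact BesidePath.not_both htri hv (dotp_tilt_lt huv t).le (hno _) hy hyu hleft hright

theorem Reaches.exists_isMonotonePath (h : Reaches G w u v) (huv : u ≠ v) :
    ∃ L, IsMonotonePath G L ∧ L.head? = some u ∧ L.getLast? = some v := by
  obtain ⟨l, hl, hlast⟩ := List.exists_isChain_cons_of_relationReflTransGen h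
  have hw : w ≠ 0 := by
    rcases Relation.ReflTransGen.cases_head h with rfl | ⟨c, hc, -⟩
    · exact absurd rfl huv
    · exact ne_zero_of_dotp_lt hc.2
  refine ⟨u :: l, ⟨⟨?_, hl.imp fun _ _ h => h.1⟩, w, hw, hl.imp fun a b h => ?_⟩, rfl, ?_⟩
  · cases l with
    | nil => exact absurd hlast huv
    | cons => simp
  · rw [dotp_sub]
    exact sub_pos.mpr h.2
  · rw [List.getLast?_eq_some_getLast (List.cons_ne_nil _ _), hlast]

variable {L : List Pt}

theorem IsPathIn.mem (h : IsPathIn G L) (hx : x ∈ L) : x ∈ G.V := by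
  obtain ⟨hlen, hchain⟩ := h
  obtain ⟨i, hi, rfl⟩ := List.getElem_of_mem hx
  rcases lt_or_ge (i + 1) L.length with hlt | hge
  · exact (G.valid.1 _ _ (List.isChain_iff_getElem.mp hchain i hlt)).1
  · obtain ⟨j, rfl⟩ := Nat.exists_eq_succ_of_ne_zero (by omega : i ≠ 0)
    exact (G.valid.1 _ _ (List.isChain_iff_getElem.mp hchain j hi)).2.1

theorem IsMonotonePath.nodup (h : IsMonotonePath G L) : L.Nodup := by
  obtain ⟨-, w, -, hmon⟩ := h
  have hchain : (L.map fun a => dotp a w).IsChain (· < ·) := by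
    rw [List.isChain_map]
    exact List.IsChain.imp (fun a b h => sub_pos.mp (dotp_sub b a w ▸ h)) hmon
  exact List.Nodup.of_map _ (hchain.pairwise.imp fun h => h.ne)

theorem finite_setOf_isMonotonePath (G : PSLG) : {L : List Pt | IsMonotonePath G L}.Finite := by
  classical
  refine ((List.finite_length_le G.V G.V.card).image (List.map Subtype.val)).subset fun L hL => ?_
  have hsub : L.toFinset ⊆ G.V := fun x hx => hL.1.mem (List.mem_toFinset.mp hx)
  refine ⟨L.attach.map fun x => ⟨x.1, hL.1.mem x.2⟩, ?_, ?_⟩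
  · simpa [List.toFinset_card_of_nodup hL.nodup] using Finset.card_le_card hsub
  · rw [List.map_map]
    exact L.attach_map_subtype_val

theorem card_mul_card_sub_one_div_two_le_monPathCount
    (h : ∀ u ∈ G.V, ∀ v ∈ G.V, u ≠ v →
      ∃ L, IsMonotonePath G L ∧ L.head? = some u ∧ L.getLast? = some v) :
    G.V.card * (G.V.card - 1) / 2 ≤ monPathCount G := by
  classical
  have hends : ∀ e ∈ G.V.offDiag.image Sym2.mk.uncurry, ∃ L : List Pt, IsMonotonePath G L ∧
      s(L.head?, L.getLast?) = e.map some := by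
    intro e he
    obtain ⟨⟨u, v⟩, huv, rfl⟩ := Finset.mem_image.mp he
    obtain ⟨hu, hv, hne⟩ := Finset.mem_offDiag.mp huv
    obtain ⟨L, hL, hhead, hlast⟩ := h u hu v hv hne
    exact ⟨L, hL, by rw [hhead, hlast]; rfl⟩
  choose! f hf using hends
  have hfin : {P : Set (List Pt) | ∃ L, IsMonotonePath G L ∧ P = {L, L.reverse}}.Finite :=
    ((finite_setOf_isMonotonePath G).image fun L => {L, L.reverse}).subset
      fun P ⟨L, hL, hP⟩ => ⟨L, hL, hP.symm⟩
  have hinj : Set.InjOn (fun e => ({f e, (f e).reverse} : Set (List Pt)))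
      (G.V.offDiag.image Sym2.mk.uncurry : Finset (Sym2 Pt)) := by
    intro e he e' he' heq
    have hmem : f e ∈ ({f e', (f e').reverse} : Set (List Pt)) :=
      Set.ext_iff.mp heq (f e) |>.mp (Set.mem_insert _ _)
    apply Sym2.map.injective (Option.some_injective Pt)
    rw [← (hf e he).2, ← (hf e' he').2]
    rcases hmem with h | h
    · rw [h]
    · rw [Set.mem_singleton_iff.mp h, List.head?_reverse, List.getLast?_reverse, Sym2.eq_swap]
  have hle := Set.ncard_le_ncard_of_injOn _
    (fun e he => show _ ∈ {P : Set (List Pt) | ∃ L, IsMonotonePath G L ∧ P = {L, L.reverse}} from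
      ⟨f e, (hf e he).1, rfl⟩) hinj hfin
  rwa [Set.ncard_coe_finset, Sym2.card_image_offDiag, Nat.choose_two_right] at hle

end Monotone

theorem monotone_paths_connect_general (G : PSLG) (htri : G.IsTriangulation) :
    (∀ u ∈ G.V, ∀ v ∈ G.V, u ≠ v →
      ∃ L : List Pt, IsMonotonePath G L ∧
        ((L.head? = some u ∧ L.getLast? = some v) ∨
         (L.head? = some v ∧ L.getLast? = some u))) ∧
    G.V.card * (G.V.card - 1) / 2 ≤ monPathCount G := by
  have hpath : ∀ u ∈ G.V, ∀ v ∈ G.V, u ≠ v →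
      ∃ L, IsMonotonePath G L ∧ L.head? = some u ∧ L.getLast? = some v := by
    intro u hu v hv huv
    obtain ⟨w, hw⟩ := htri.exists_reaches hu hv huv
    exact hw.exists_isMonotonePath huv
  refine ⟨fun u hu v hv huv => ?_, card_mul_card_sub_one_div_two_le_monPathCount hpath⟩
  obtain ⟨L, hL, hends⟩ := hpath u hu v hv huv
  exact ⟨L, hL, Or.inl hends⟩

/-- in a triangulation of `n ≥ 3` points (no three collinear), every pair
of distinct points is connected by a monotone path; hence there are at least
`n(n−1)/2` monotone paths. -/
theorem monotone_paths_connect (G : PSLG)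
    (hcard : 3 ≤ G.V.card) (hgen : NoThreeCollinear G.V)
    (htri : G.IsTriangulation) :
    (∀ u ∈ G.V, ∀ v ∈ G.V, u ≠ v →
      ∃ L : List Pt, IsMonotonePath G L ∧
        ((L.head? = some u ∧ L.getLast? = some v) ∨
         (L.head? = some v ∧ L.getLast? = some u))) ∧
    G.V.card * (G.V.card - 1) / 2 ≤ monPathCount G :=
  monotone_paths_connect_general G htri

end
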